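/- (Proposition: the third Bott–Chern form) In the Cholesky setting, set Ψ = (1/2)Tr( 𝛉𝚯𝛉̄ − 𝛉̄𝚯𝛉 − (1/2)(θθ̄)² + (θ₁² + θ₂² + θ₁θ₂)θ̄₁θ̄₂ − (θ₁² + θ₂² + θ₂θ₁)θ̄₂θ̄₁ − (θ₂θ₁ − θ₁θ₂)(θ̄₁² + θ̄₂²) − θ₂θ̄₁θ₂θ̄₂ + θ₁θ̄₁θ₁θ̄₂ − θ₂θ̄₁θ₁θ̄₁ + θ₂θ̄₂θ₁θ̄₂ + (1/2)((θ₁θ̄₂)² − (θ₂θ̄₁)²) ). Then Tr(𝚯³) = ∂̄∂Ψ; equivalently, the third Chern character form ch₃ = (1/6)Tr(𝚯³) satisfies ch₃ = ∂̄∂ bc₃ with bc₃ = (1/6)Ψ. -/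

import Mathlib

/-- An abstract model of the Dolbeault double complex of `(p,q)`-forms on a complex
manifold: a bigraded associative `ℂ`-algebra `Ω = ⨁ Ω^{p,q}`, graded-commutative with
respect to total degree, with `ℂ`-linear operators `∂` (`pd`) and `∂̄` (`pdb`) of
bidegrees `(1,0)` and `(0,1)`, squaring to zero and anticommuting, satisfying the
graded Leibniz rule. -/
structure DolbeaultAlgebra (Ω : Type*) [Ring Ω] [Algebra ℂ Ω] where
  /-- the `ℂ`-subspace of elements of bidegree `(p,q)` -/
  deg : ℕ → ℕ → Submodule ℂ Ω
  one_mem : (1 : Ω) ∈ deg 0 0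
  mul_mem : ∀ {p q p' q'} {a b : Ω}, a ∈ deg p q → b ∈ deg p' q' →
    a * b ∈ deg (p + p') (q + q')
  gcomm : ∀ {p q p' q'} (a b : Ω), a ∈ deg p q → b ∈ deg p' q' →
    a * b = ((-1 : ℂ) ^ ((p + q) * (p' + q'))) • (b * a)
  /-- the operator `∂` -/
  pd : Ω →ₗ[ℂ] Ω
  /-- the operator `∂̄` -/
  pdb : Ω →ₗ[ℂ] Ω
  pd_mem : ∀ {p q} {a : Ω}, a ∈ deg p q → pd a ∈ deg (p + 1) q
  pdb_mem : ∀ {p q} {a : Ω}, a ∈ deg p q → pdb a ∈ deg p (q + 1)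
  pd_pd : ∀ a : Ω, pd (pd a) = 0
  pdb_pdb : ∀ a : Ω, pdb (pdb a) = 0
  pd_pdb : ∀ a : Ω, pd (pdb a) + pdb (pd a) = 0
  pd_leibniz : ∀ {p q} (a b : Ω), a ∈ deg p q →
    pd (a * b) = pd a * b + ((-1 : ℂ) ^ (p + q)) • (a * pd b)
  pdb_leibniz : ∀ {p q} (a b : Ω), a ∈ deg p q →
    pdb (a * b) = pdb a * b + ((-1 : ℂ) ^ (p + q)) • (a * pdb b)

namespace DolbeaultAlgebra

variable {Ω : Type*} [Ring Ω] [Algebra ℂ Ω] {r : ℕ}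

/-- the entrywise extension of `∂` to `r × r` matrices over `Ω` -/
def mpd (A : DolbeaultAlgebra Ω) (M : Matrix (Fin r) (Fin r) Ω) :
    Matrix (Fin r) (Fin r) Ω := M.map A.pd

/-- the entrywise extension of `∂̄` to `r × r` matrices over `Ω` -/
def mpdb (A : DolbeaultAlgebra Ω) (M : Matrix (Fin r) (Fin r) Ω) :
    Matrix (Fin r) (Fin r) Ω := M.map A.pdb

/-- the assertion that all entries of a matrix lie in `Ω^{p,q}` -/
def MatDeg (A : DolbeaultAlgebra Ω) (p q : ℕ) (M : Matrix (Fin r) (Fin r) Ω) : Prop :=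
  ∀ i j, M i j ∈ A.deg p q

end DolbeaultAlgebra

variable {Ω : Type*} [Ring Ω] [Algebra ℂ Ω]

/-!
Put `t = h⁻¹∂h`, `s = h⁻¹∂̄h` and `F = ∂̄t`. As `∂̄F = 0`, one has `Tr F³ = ∂̄ Tr(tF²)`, and a
Chern–Simons computation gives, modulo `∂̄`-exact terms,
`4 Tr(tF²) ≡ ∂ Tr(2(tFs - sFt) - (ts)²) + 2ω`, where `ω` is the part of `(1/5) Tr(t + s)⁵` cubic in
`t` and quadratic in `s`. It remains to see that `ω` is exact.

With `d = ∂ + ∂̄`, the form `t + s = h⁻¹dh` is conjugate by `b` to `u + v`, where `u = (db)b⁻¹` and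
`v = c⁻¹dc` satisfy `du = u²` and `dv = -v²`. The Polyakov–Wiegmann formula expresses
`Tr(u + v)⁵ - Tr u⁵ - Tr v⁵` as the trace of an explicit exact form; replacing `d` by the pencil
`∂ + X∂̄` and reading off the coefficient of `X²` isolates its part of bidegree `(3,2)`. Finally `u`
and `v` are triangular, so only diagonal entries contribute to `Tr u⁵` and `Tr v⁵`, and these are
odd elements of a graded-commutative ring, whose squares vanish.
-/

section GradedRing

/-! ### Graded differentials and traces -/

variable {R V : Type*} [Ring R] [AddCommGroup V]

/-- A differential on a graded ring: a square-zero additive map of degree `1` satisfying the graded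
Leibniz rule. The homogeneous parts `G n` need not be independent nor span `R`. -/
structure IsGradedDifferential (G : ℕ → AddSubgroup R) (d : R →+ R) : Prop where
  map_mem : ∀ {n x}, x ∈ G n → d x ∈ G (n + 1)
  map_mul : ∀ {n x}, x ∈ G n → ∀ y, d (x * y) = d x * y + (-1 : ℤ) ^ n • (x * d y)
  map_map : ∀ x, d (d x) = 0

/-- A trace on a graded ring: an additive map vanishing on graded commutators. Graded commutativity
of `R` is the special case of the identity map. -/
def IsGradedTrace (G : ℕ → AddSubgroup R) (τ : R →+ V) : Prop :=
  ∀ ⦃m n x y⦄, x ∈ G m → y ∈ G n → τ (x * y) = (-1 : ℤ) ^ (m * n) • τ (y * x)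

/-- A degree-zero element `g` together with its two-sided inverse `g'`, also of degree zero. -/
structure IsInversePair (G : ℕ → AddSubgroup R) (g g' : R) : Prop where
  mem : g ∈ G 0
  inv_mem : g' ∈ G 0
  inv_mul : g' * g = 1
  mul_inv : g * g' = 1

variable {G : ℕ → AddSubgroup R}

theorem IsInversePair.mul [SetLike.GradedMonoid G] {g g' k k' : R} (hg : IsInversePair G g g')
    (hk : IsInversePair G k k') : IsInversePair G (g * k) (k' * g') where
  mem := SetLike.mul_mem_graded hg.mem hk.mem
  inv_mem := SetLike.mul_mem_graded hk.inv_mem hg.inv_mem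
  inv_mul := by rw [mul_assoc, ← mul_assoc g', hg.inv_mul, one_mul, hk.inv_mul]
  mul_inv := by rw [mul_assoc, ← mul_assoc k, hk.mul_inv, one_mul, hg.mul_inv]

theorem conj_mul_conj {g g' : R} (hr : g * g' = 1) (x y : R) :
    g' * x * g * (g' * y * g) = g' * (x * y) * g := by
  calc g' * x * g * (g' * y * g) = g' * x * (g * g') * y * g := by noncomm_ring
    _ = g' * (x * y) * g := by rw [hr]; noncomm_ring

namespace IsGradedDifferential

variable {d : R →+ R}

theorem map_mul_of_even (hd : IsGradedDifferential G d) {n : ℕ} (hn : Even n) {x : R}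
    (hx : x ∈ G n) (y : R) : d (x * y) = d x * y + x * d y := by
  rw [hd.map_mul hx, hn.neg_one_pow, one_smul]

theorem map_mul_of_odd (hd : IsGradedDifferential G d) {n : ℕ} (hn : Odd n) {x : R}
    (hx : x ∈ G n) (y : R) : d (x * y) = d x * y - x * d y := by
  rw [hd.map_mul hx, hn.neg_one_pow, neg_one_smul, sub_eq_add_neg]

theorem logDeriv_mul (hd : IsGradedDifferential G d) {b b' c c' : R} (hb : IsInversePair G b b')
    (hc : IsInversePair G c c') :
    b' * c' * d (c * b) = b' * (d b * b' + c' * d c) * b := by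
  rw [hd.map_mul_of_even Even.zero hc.mem]
  calc b' * c' * (d c * b + c * d b) = b' * c' * d c * b + b' * (c' * c) * d b := by noncomm_ring
    _ = b' * (d b * (b' * b) + c' * d c * b) := by
      rw [hb.inv_mul, hc.inv_mul]
      noncomm_ring
    _ = b' * (d b * b' + c' * d c) * b := by noncomm_ring

theorem right_logDeriv_mem [SetLike.GradedMonoid G] (hd : IsGradedDifferential G d) {g g' : R}
    (hg : IsInversePair G g g') : d g * g' ∈ G 1 :=
  SetLike.mul_mem_graded (hd.map_mem hg.mem) hg.inv_mem

theorem left_logDeriv_mem [SetLike.GradedMonoid G] (hd : IsGradedDifferential G d) {g g' : R}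
    (hg : IsInversePair G g g') : g' * d g ∈ G 1 :=
  SetLike.mul_mem_graded hg.inv_mem (hd.map_mem hg.mem)

theorem map_one [SetLike.GradedOne G] (hd : IsGradedDifferential G d) : d 1 = 0 := by
  have h := hd.map_mul_of_even Even.zero (SetLike.GradedOne.one_mem (A := G)) 1
  simpa using h

variable [SetLike.GradedOne G] {g g' : R}

theorem map_inv (hd : IsGradedDifferential G d) (hg : IsInversePair G g g') :
    d g' = -(g' * d g * g') := by
  have h : d g' * g + g' * d g = 0 := by
    rw [← hd.map_mul_of_even Even.zero hg.inv_mem, hg.inv_mul, hd.map_one]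
  calc d g' = d g' * g * g' := by rw [mul_assoc, hg.mul_inv, mul_one]
    _ = -(g' * d g * g') := by rw [eq_neg_of_add_eq_zero_left h, neg_mul]

theorem maurerCartan_left (hd : IsGradedDifferential G d) (hg : IsInversePair G g g') :
    d (g' * d g) = -(g' * d g) ^ 2 := by
  rw [hd.map_mul_of_even Even.zero hg.inv_mem, hd.map_map, hd.map_inv hg]
  noncomm_ring

theorem maurerCartan_right (hd : IsGradedDifferential G d) (hg : IsInversePair G g g') :
    d (d g * g') = (d g * g') ^ 2 := by
  rw [hd.map_mul_of_odd odd_one (hd.map_mem hg.mem), hd.map_map, hd.map_inv hg]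
  noncomm_ring

end IsGradedDifferential

/-- The two differentials of a double complex, for the total grading. -/
structure IsBidifferential (G : ℕ → AddSubgroup R) (d₁ d₂ : R →+ R) : Prop where
  fst : IsGradedDifferential G d₁
  snd : IsGradedDifferential G d₂
  anticomm : ∀ x, d₁ (d₂ x) + d₂ (d₁ x) = 0

namespace IsBidifferential

variable {d₁ d₂ : R →+ R}

theorem map_map (h : IsBidifferential G d₁ d₂) (x : R) : d₁ (d₂ x) = -d₂ (d₁ x) :=
  eq_neg_of_add_eq_zero_left (h.anticomm x)

theorem maurerCartan_mixed [SetLike.GradedOne G] (h : IsBidifferential G d₁ d₂) {g g' : R}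
    (hg : IsInversePair G g g') :
    d₁ (g' * d₂ g) = -d₂ (g' * d₁ g) - g' * d₁ g * (g' * d₂ g) - g' * d₂ g * (g' * d₁ g) := by
  rw [h.fst.map_mul_of_even Even.zero hg.inv_mem, h.snd.map_mul_of_even Even.zero hg.inv_mem,
    h.fst.map_inv hg, h.snd.map_inv hg, h.map_map g]
  noncomm_ring

end IsBidifferential

namespace IsGradedTrace

variable {τ : R →+ V}

theorem comm_of_even (hτ : IsGradedTrace G τ) {m n : ℕ} (hmn : Even (m * n)) {x y : R}
    (hx : x ∈ G m) (hy : y ∈ G n) : τ (x * y) = τ (y * x) := by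
  rw [hτ hx hy, hmn.neg_one_pow, one_smul]

theorem comm_of_odd (hτ : IsGradedTrace G τ) {m n : ℕ} (hmn : Odd (m * n)) {x y : R}
    (hx : x ∈ G m) (hy : y ∈ G n) : τ (x * y) = -τ (y * x) := by
  rw [hτ hx hy, hmn.neg_one_pow, neg_one_smul]

theorem mul_self_eq_zero [IsAddTorsionFree R] (hR : IsGradedTrace G (AddMonoidHom.id R)) {x : R}
    (hx : x ∈ G 1) : x * x = 0 :=
  self_eq_neg.1 (hR.comm_of_odd odd_one hx hx)

variable [SetLike.GradedMonoid G]

theorem map_conj (hτ : IsGradedTrace G τ) {n : ℕ} {x g g' : R} (hx : x ∈ G n)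
    (hg : IsInversePair G g g') : τ (g' * x * g) = τ x := by
  have hxg : x * g ∈ G n := SetLike.mul_mem_graded hx hg.mem
  rw [mul_assoc, hτ.comm_of_even (by simp) hg.inv_mem hxg, mul_assoc, hg.mul_inv, mul_one]

theorem rotate_quartic (hτ : IsGradedTrace G τ) {x₁ x₂ x₃ x₄ : R}
    (h₁ : x₁ ∈ G 1) (h₂ : x₂ ∈ G 1) (h₃ : x₃ ∈ G 1) (h₄ : x₄ ∈ G 1) :
    τ (x₁ * x₂ * x₃ * x₄) = -τ (x₂ * x₃ * x₄ * x₁) := by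
  have h : x₂ * x₃ * x₄ ∈ G 3 := SetLike.mul_mem_graded (SetLike.mul_mem_graded h₂ h₃) h₄
  rw [← hτ.comm_of_odd (by decide) h₁ h]
  simp only [mul_assoc]

theorem rotate_quintic (hτ : IsGradedTrace G τ) {x₁ x₂ x₃ x₄ x₅ : R} (h₁ : x₁ ∈ G 1)
    (h₂ : x₂ ∈ G 1) (h₃ : x₃ ∈ G 1) (h₄ : x₄ ∈ G 1) (h₅ : x₅ ∈ G 1) :
    τ (x₁ * x₂ * x₃ * x₄ * x₅) = τ (x₂ * x₃ * x₄ * x₅ * x₁) := by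
  have h : x₂ * x₃ * x₄ * x₅ ∈ G 4 :=
    SetLike.mul_mem_graded (SetLike.mul_mem_graded (SetLike.mul_mem_graded h₂ h₃) h₄) h₅
  rw [← hτ.comm_of_even (by decide) h₁ h]
  simp only [mul_assoc]

theorem sum_rotations_quintic (hτ : IsGradedTrace G τ) {x₁ x₂ x₃ x₄ x₅ : R} (h₁ : x₁ ∈ G 1)
    (h₂ : x₂ ∈ G 1) (h₃ : x₃ ∈ G 1) (h₄ : x₄ ∈ G 1) (h₅ : x₅ ∈ G 1) :
    τ (x₁ * x₂ * x₃ * x₄ * x₅ + x₂ * x₃ * x₄ * x₅ * x₁ + x₃ * x₄ * x₅ * x₁ * x₂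
      + x₄ * x₅ * x₁ * x₂ * x₃ + x₅ * x₁ * x₂ * x₃ * x₄) = 5 • τ (x₁ * x₂ * x₃ * x₄ * x₅) := by
  simp only [map_add]
  rw [hτ.rotate_quintic h₅ h₁ h₂ h₃ h₄, hτ.rotate_quintic h₁ h₂ h₃ h₄ h₅,
    hτ.rotate_quintic h₂ h₃ h₄ h₅ h₁, hτ.rotate_quintic h₃ h₄ h₅ h₁ h₂,
    hτ.rotate_quintic h₄ h₅ h₁ h₂ h₃]
  abel

theorem map_add_pow_five (hτ : IsGradedTrace G τ) {u v : R}
    (hu : u ∈ G 1) (hv : v ∈ G 1) :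
    τ ((u + v) ^ 5) = τ (u ^ 5) + τ (v ^ 5) + 5 • τ (u * u * u * u * v) + 5 • τ (u * u * u * v * v)
      + 5 • τ (u * u * v * u * v) + 5 • τ (u * u * v * v * v) + 5 • τ (u * v * u * v * v)
      + 5 • τ (u * v * v * v * v) := by
  rw [← hτ.sum_rotations_quintic hu hu hu hu hv, ← hτ.sum_rotations_quintic hu hu hu hv hv,
    ← hτ.sum_rotations_quintic hu hu hv hu hv, ← hτ.sum_rotations_quintic hu hu hv hv hv,
    ← hτ.sum_rotations_quintic hu hv hu hv hv, ← hτ.sum_rotations_quintic hu hv hv hv hv]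
  simp only [← map_add]
  congr 1
  noncomm_ring

end IsGradedTrace

/-! ### The Polyakov–Wiegmann formula and Chern–Simons transgression -/

/-- `Tr (mixedQuintic t s)` is the part of `(1/5) Tr (t + s)⁵` that is cubic in `t` and quadratic
in `s`. -/
def mixedQuintic (t s : R) : R := t ^ 3 * s ^ 2 + t ^ 2 * s * t * s

/-- The form `κ` with `2 Tr (u + v)⁵ = 2 Tr u⁵ + 2 Tr v⁵ + 5 Tr dκ` whenever `du = u²` and
`dv = -v²`. -/
def polyakovWiegmannForm (u v : R) : R := 2 * (u ^ 3 * v + u * v ^ 3) + (u * v) ^ 2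

-- Right-nested, so that the Leibniz rule peels off one factor at a time.
theorem polyakovWiegmannForm_eq (u v : R) :
    polyakovWiegmannForm u v
      = 2 • (u * (u * (u * v)) + u * (v * (v * v))) + u * (v * (u * v)) := by
  rw [polyakovWiegmannForm]
  noncomm_ring

theorem IsGradedDifferential.map_polyakovWiegmannForm {d : R →+ R} (hd : IsGradedDifferential G d)
    {u v : R} (hu : u ∈ G 1) (hv : v ∈ G 1) (hdu : d u = u ^ 2) (hdv : d v = -v ^ 2) :
    d (polyakovWiegmannForm u v)
      = 2 • (u ^ 4 * v + u ^ 3 * v ^ 2 + u ^ 2 * v ^ 3 + u * v ^ 4)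
        + (u * u * v * u * v + u * v * v * u * v + u * v * u * u * v + u * v * u * v * v) := by
  have h₁ (y : R) := hd.map_mul_of_odd odd_one hu y
  have h₂ (y : R) := hd.map_mul_of_odd odd_one hv y
  rw [polyakovWiegmannForm_eq]
  simp only [map_add, map_nsmul, h₁, h₂, hdu, hdv]
  noncomm_ring

theorem polyakovWiegmann [SetLike.GradedMonoid G] {τ : R →+ V} (hτ : IsGradedTrace G τ) {d : R →+ R}
    (hd : IsGradedDifferential G d) {u v : R} (hu : u ∈ G 1) (hv : v ∈ G 1)
    (hdu : d u = u ^ 2) (hdv : d v = -v ^ 2) :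
    2 • τ ((u + v) ^ 5)
      = 2 • τ (u ^ 5) + 2 • τ (v ^ 5) + 5 • τ (d (polyakovWiegmannForm u v)) := by
  have h₁ : τ (u * v * v * u * v) = τ (u * v * u * v * v) := by
    rw [← hτ.rotate_quintic hv hu hv hv hu, ← hτ.rotate_quintic hu hv hu hv hv]
  rw [hτ.map_add_pow_five hu hv, hd.map_polyakovWiegmannForm hu hv hdu hdv]
  have h₂ : τ (u * v * u * u * v) = τ (u * u * v * u * v) := by
    rw [hτ.rotate_quintic hu hv hu hu hv, hτ.rotate_quintic hv hu hu hv hu]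
  simp only [map_add, map_nsmul, h₁, h₂]
  simp only [pow_succ, pow_zero, one_mul, mul_assoc]
  abel

/-- The Maurer–Cartan and Bianchi identities for the connection form `t = h⁻¹∂h`, its companion
`s = h⁻¹∂̄h` and the curvature `F = ∂̄t`. -/
structure IsChernConnection (G : ℕ → AddSubgroup R) (d₁ d₂ : R →+ R) (t s F : R) : Prop where
  t_mem : t ∈ G 1
  s_mem : s ∈ G 1
  F_mem : F ∈ G 2
  d₁_t : d₁ t = -t ^ 2
  d₁_s : d₁ s = -F - t * s - s * t
  d₁_F : d₁ F = F * t - t * F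
  d₂_t : d₂ t = F
  d₂_s : d₂ s = -s ^ 2
  d₂_F : d₂ F = 0

namespace IsChernConnection

variable {τ : R →+ V} {d₁ d₂ : R →+ R} {t s F : R}

theorem d₂_mul_sq (hc : IsChernConnection G d₁ d₂ t s F) (h₂ : IsGradedDifferential G d₂) :
    d₂ (t * F ^ 2) = F ^ 3 := by
  rw [h₂.map_mul_of_odd odd_one hc.t_mem, sq, h₂.map_mul_of_even even_two hc.F_mem, hc.d₂_t,
    hc.d₂_F]
  noncomm_ring

theorem d₂_cube_mul (hc : IsChernConnection G d₁ d₂ t s F)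
    (h₂ : IsGradedDifferential G d₂) :
    d₂ (t ^ 3 * s) = F * t ^ 2 * s - t * F * t * s + t ^ 2 * F * s + t ^ 3 * s ^ 2 := by
  have hd (y : R) := h₂.map_mul_of_odd odd_one hc.t_mem y
  rw [show t ^ 3 * s = t * (t * (t * s)) by noncomm_ring, hd, hd, hd, hc.d₂_t, hc.d₂_s]
  noncomm_ring

variable [SetLike.GradedMonoid G]

theorem trace_d₁_sandwich (hc : IsChernConnection G d₁ d₂ t s F) (hτ : IsGradedTrace G τ)
    (h₁ : IsGradedDifferential G d₁) :
    τ (d₁ (t * F * s - s * F * t))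
      = 2 • τ (t * F ^ 2) + τ (t ^ 2 * F * s) + τ (F * t ^ 2 * s) := by
  obtain ⟨ht, hs, hF, ht₁, hs₁, hF₁, -⟩ := hc
  have hd : d₁ (t * F * s - s * F * t)
      = t * (F * F) + (t * F * s) * t + (F * F) * t + (t * s) * (F * t) := by
    rw [map_sub, mul_assoc t, mul_assoc s]
    simp only [h₁.map_mul_of_odd odd_one ht, h₁.map_mul_of_odd odd_one hs,
      h₁.map_mul_of_even even_two hF, ht₁, hs₁, hF₁]
    noncomm_ring
  have hFF : τ (F * F * t) = τ (t * (F * F)) :=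
    hτ.comm_of_even (by decide) (SetLike.mul_mem_graded hF hF) ht
  have hFst : τ (t * F * s * t) = τ (t * (t * F * s)) :=
    hτ.comm_of_even (by decide) (SetLike.mul_mem_graded (SetLike.mul_mem_graded ht hF) hs) ht
  have hsFt : τ (t * s * (F * t)) = τ (F * t * (t * s)) :=
    hτ.comm_of_even (by decide) (SetLike.mul_mem_graded ht hs) (SetLike.mul_mem_graded hF ht)
  rw [hd, map_add, map_add, map_add, hFF, hFst, hsFt]
  simp only [sq, two_nsmul, mul_assoc]
  abel

theorem trace_d₁_sq (hc : IsChernConnection G d₁ d₂ t s F) (hτ : IsGradedTrace G τ)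
    (h₁ : IsGradedDifferential G d₁) :
    τ (d₁ ((t * s) ^ 2)) = 2 • τ (t * F * t * s) + 2 • τ (t ^ 2 * s * t * s) := by
  obtain ⟨ht, hs, -, ht₁, hs₁, -⟩ := hc
  have hts : t * s ∈ G 2 := SetLike.mul_mem_graded ht hs
  have hd₁ts : d₁ (t * s) = t * F + t * s * t := by
    rw [h₁.map_mul_of_odd odd_one ht, ht₁, hs₁]
    noncomm_ring
  have htF : t * F + t * s * t ∈ G 3 := hd₁ts ▸ h₁.map_mem hts
  have hrot : τ (t * s * t * t * s) = τ (t * t * s * t * s) := by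
    rw [hτ.rotate_quintic ht hs ht ht hs, hτ.rotate_quintic hs ht ht hs ht]
  rw [sq (t * s), h₁.map_mul_of_even even_two hts, hd₁ts, map_add,
    hτ.comm_of_even (by decide) hts htF, ← two_nsmul, add_mul, map_add, nsmul_add,
    ← mul_assoc (t * s * t), hrot]
  simp only [sq, mul_assoc]

theorem trace_chernSimons (hc : IsChernConnection G d₁ d₂ t s F) (hτ : IsGradedTrace G τ)
    (h : IsBidifferential G d₁ d₂) :
    2 • τ (d₁ (t * F * s - s * F * t)) - τ (d₁ ((t * s) ^ 2))
      = 4 • τ (t * F ^ 2) + 2 • τ (d₂ (t ^ 3 * s)) - 2 • τ (mixedQuintic t s) := by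
  rw [hc.trace_d₁_sandwich hτ h.fst, hc.trace_d₁_sq hτ h.fst, hc.d₂_cube_mul h.snd, mixedQuintic]
  simp only [map_add, map_sub]
  abel

theorem of_isInversePair (h : IsBidifferential G d₁ d₂) {g g' : R} (hg : IsInversePair G g g') :
    IsChernConnection G d₁ d₂ (g' * d₁ g) (g' * d₂ g) (d₂ (g' * d₁ g)) := by
  have ht : g' * d₁ g ∈ G 1 := h.fst.left_logDeriv_mem hg
  refine ⟨ht, h.snd.left_logDeriv_mem hg, h.snd.map_mem ht,
    h.fst.maurerCartan_left hg, h.maurerCartan_mixed hg, ?_, rfl,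
    h.snd.maurerCartan_left hg, h.snd.map_map _⟩
  rw [h.map_map, h.fst.maurerCartan_left hg, map_neg, neg_neg, sq, h.snd.map_mul_of_odd odd_one ht]

end IsChernConnection

/-! ### The pencil of differentials -/

open PowerSeries

/-- The grading of `R⟦X⟧` in which `X` has degree `0`. -/
noncomputable def powerSeriesGrading (G : ℕ → AddSubgroup R) (n : ℕ) : AddSubgroup R⟦X⟧ :=
  ⨅ k, (G n).comap (coeff k : R⟦X⟧ →ₗ[R] R).toAddMonoidHom

theorem mem_powerSeriesGrading {n : ℕ} {f : R⟦X⟧} :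
    f ∈ powerSeriesGrading G n ↔ ∀ k, coeff k f ∈ G n := by
  simp [powerSeriesGrading, AddSubgroup.mem_iInf]

theorem C_mem_powerSeriesGrading {n : ℕ} {x : R} (hx : x ∈ G n) :
    C x ∈ powerSeriesGrading G n := by
  refine mem_powerSeriesGrading.2 fun k => ?_
  rw [coeff_C]
  split_ifs
  exacts [hx, zero_mem _]

instance [SetLike.GradedMonoid G] : SetLike.GradedMonoid (powerSeriesGrading G) where
  one_mem := C_mem_powerSeriesGrading (SetLike.GradedOne.one_mem (A := G))
  mul_mem i j f g hf hg := by
    rw [mem_powerSeriesGrading] at hf hg ⊢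
    intro k
    rw [coeff_mul]
    exact sum_mem fun p _ => SetLike.mul_mem_graded (hf p.1) (hg p.2)

theorem IsInversePair.map_C {g g' : R} (hg : IsInversePair G g g') :
    IsInversePair (powerSeriesGrading G) (C g) (C g') where
  mem := C_mem_powerSeriesGrading hg.mem
  inv_mem := C_mem_powerSeriesGrading hg.inv_mem
  inv_mul := by rw [← map_mul, hg.inv_mul, map_one]
  mul_inv := by rw [← map_mul, hg.mul_inv, map_one]

/-- The pencil of differentials `d₁ + X d₂`, extended `X`-linearly to power series. -/
noncomputable def pencil (d₁ d₂ : R →+ R) : R⟦X⟧ →+ R⟦X⟧ where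
  toFun f := mk (fun k => d₁ (coeff k f)) + X * mk (fun k => d₂ (coeff k f))
  map_zero' := by ext (_ | k) <;> simp
  map_add' f g := by
    ext (_ | k)
    · simp
    · simp only [map_add, coeff_succ_X_mul, coeff_mk]
      abel

theorem coeff_zero_pencil (d₁ d₂ : R →+ R) (f : R⟦X⟧) :
    coeff 0 (pencil d₁ d₂ f) = d₁ (coeff 0 f) := by
  simp [pencil]

theorem coeff_succ_pencil (d₁ d₂ : R →+ R) (f : R⟦X⟧) (k : ℕ) :
    coeff (k + 1) (pencil d₁ d₂ f) = d₁ (coeff (k + 1) f) + d₂ (coeff k f) := by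
  simp [pencil]

/-- The linear power series `x + yX`, which packages a pair of forms as a single one. -/
noncomputable def linearSeries (x y : R) : R⟦X⟧ := C x + X * C y

theorem coeff_zero_linearSeries (x y : R) : coeff 0 (linearSeries x y) = x := by
  simp [linearSeries]

theorem coeff_one_linearSeries (x y : R) : coeff 1 (linearSeries x y) = y := by
  simp [linearSeries]

theorem coeff_add_two_linearSeries (x y : R) (k : ℕ) : coeff (k + 2) (linearSeries x y) = 0 := by
  simp [linearSeries, coeff_X]

theorem coeff_zero_linearSeries_mul (x y : R) (f : R⟦X⟧) :
    coeff 0 (linearSeries x y * f) = x * coeff 0 f := by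
  simp [linearSeries, add_mul, mul_assoc]

theorem coeff_succ_linearSeries_mul (x y : R) (f : R⟦X⟧) (k : ℕ) :
    coeff (k + 1) (linearSeries x y * f) = x * coeff (k + 1) f + y * coeff k f := by
  simp [linearSeries, add_mul, mul_assoc, coeff_C_mul, coeff_succ_X_mul]

theorem linearSeries_add (x y x' y' : R) :
    linearSeries x y + linearSeries x' y' = linearSeries (x + x') (y + y') := by
  simp only [linearSeries, map_add, mul_add]
  abel

theorem linearSeries_mul_C (x y z : R) :
    linearSeries x y * C z = linearSeries (x * z) (y * z) := by
  simp only [linearSeries, add_mul, mul_assoc, map_mul]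

theorem C_mul_linearSeries (x y z : R) :
    C z * linearSeries x y = linearSeries (z * x) (z * y) := by
  rw [linearSeries, mul_add, ← mul_assoc, (commute_X (C z)).eq, mul_assoc, ← map_mul, ← map_mul,
    linearSeries]

theorem linearSeries_mem_powerSeriesGrading {n : ℕ} {x y : R} (hx : x ∈ G n) (hy : y ∈ G n) :
    linearSeries x y ∈ powerSeriesGrading G n := by
  refine mem_powerSeriesGrading.2 ?_
  rintro (_ | _ | k)
  · rwa [coeff_zero_linearSeries]
  · rwa [zero_add, coeff_one_linearSeries]
  · rw [coeff_add_two_linearSeries]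
    exact zero_mem _

theorem pencil_C (d₁ d₂ : R →+ R) (x : R) : pencil d₁ d₂ (C x) = linearSeries (d₁ x) (d₂ x) := by
  ext (_ | k)
  · rw [coeff_zero_pencil, coeff_zero_linearSeries, coeff_zero_C]
  · rw [coeff_succ_pencil, linearSeries, map_add, coeff_succ_C, coeff_succ_C, coeff_succ_X_mul,
      coeff_C, coeff_C]
    split_ifs <;> simp

theorem IsBidifferential.isGradedDifferential_pencil {d₁ d₂ : R →+ R}
    (h : IsBidifferential G d₁ d₂) :
    IsGradedDifferential (powerSeriesGrading G) (pencil d₁ d₂) where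
  map_mem {n f} hf := by
    rw [mem_powerSeriesGrading] at hf ⊢
    rintro (_ | k)
    · simpa only [coeff_zero_pencil] using h.fst.map_mem (hf 0)
    · rw [coeff_succ_pencil]
      exact add_mem (h.fst.map_mem (hf (k + 1))) (h.snd.map_mem (hf k))
  map_mul {n f} hf g := by
    have key {d : R →+ R} (hd : IsGradedDifferential G d) :
        PowerSeries.mk (fun k => d (coeff k (f * g)))
          = PowerSeries.mk (fun k => d (coeff k f)) * g
            + (-1 : ℤ) ^ n • (f * PowerSeries.mk (fun k => d (coeff k g))) := by
      ext k
      simp only [coeff_mk, map_add, map_zsmul, coeff_mul, map_sum, Finset.smul_sum,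
        ← Finset.sum_add_distrib]
      exact Finset.sum_congr rfl fun p _ => hd.map_mul (mem_powerSeriesGrading.1 hf p.1) _
    simp only [pencil, AddMonoidHom.coe_mk, ZeroHom.coe_mk, key h.fst, key h.snd, mul_add, add_mul,
      smul_add, ← mul_assoc, X_mul, smul_mul_assoc]
    simp only [mul_assoc, X_mul]
    abel
  map_map f := by
    ext (_ | _ | k)
    · simp only [coeff_zero_pencil, h.fst.map_map, map_zero]
    · simp only [coeff_zero_pencil, coeff_succ_pencil, h.fst.map_map, map_zero, zero_add,
        map_add, h.anticomm]
    · simp only [coeff_succ_pencil, map_add, h.fst.map_map, h.snd.map_map, map_zero, zero_add,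
        add_zero, h.anticomm]

theorem IsGradedTrace.comp_coeff {τ : R →+ V} (hτ : IsGradedTrace G τ) (k : ℕ) :
    IsGradedTrace (powerSeriesGrading G)
      (τ.comp (coeff k : R⟦X⟧ →ₗ[R] R).toAddMonoidHom) := by
  intro m n f g hf hg
  rw [mem_powerSeriesGrading] at hf hg
  simp only [AddMonoidHom.comp_apply, LinearMap.toAddMonoidHom_coe, coeff_mul, map_sum]
  rw [← Finset.Nat.sum_antidiagonal_swap, Finset.smul_sum]
  exact Finset.sum_congr rfl fun p _ => hτ (hf p.2) (hg p.1)

theorem coeff_two_linearSeries_pow_five (t s : R) :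
    coeff 2 (linearSeries t s ^ 5) =
      (t * t * t * s * s + t * t * s * s * t + t * s * s * t * t + s * s * t * t * t
        + s * t * t * t * s)
      + (t * t * s * t * s + t * s * t * s * t + s * t * s * t * t + t * s * t * t * s
        + s * t * t * s * t) := by
  simp only [pow_succ', pow_zero, mul_one, coeff_succ_linearSeries_mul,
    coeff_zero_linearSeries_mul, coeff_zero_linearSeries, coeff_one_linearSeries,
    coeff_add_two_linearSeries, zero_add]
  noncomm_ring

theorem coeff_two_polyakovWiegmannForm (a A b B : R) :
    coeff 2 (polyakovWiegmannForm (linearSeries a A) (linearSeries b B)) =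
      2 • (a * A * A * b + A * a * A * b + A * A * a * b + a * a * A * B + a * A * a * B
        + A * a * a * B + a * b * B * B + a * B * b * B + a * B * B * b + A * b * b * B
        + A * b * B * b + A * B * b * b)
      + (A * B * a * b + A * b * A * b + A * b * a * B + a * B * A * b + a * B * a * B
        + a * b * A * B) := by
  simp only [polyakovWiegmannForm_eq, map_add, map_nsmul, coeff_succ_linearSeries_mul,
    coeff_zero_linearSeries_mul, coeff_zero_linearSeries, coeff_one_linearSeries,
    coeff_add_two_linearSeries, zero_add]
  noncomm_ring

/-- The terms with coefficient `±1` of the third Bott–Chern form that are quartic in `a = θ₁`,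
`A = θ̄₁`, `b = θ₂` and `B = θ̄₂`. -/
def mixedQuartic (a A b B : R) : R :=
  (a ^ 2 + b ^ 2 + a * b) * A * B - (a ^ 2 + b ^ 2 + b * a) * B * A
    - (b * a - a * b) * (A ^ 2 + B ^ 2) - b * A * b * B + a * A * a * B - b * A * a * A
    + b * B * a * B

section GradedMonoid

variable [SetLike.GradedMonoid G]

theorem IsGradedTrace.map_coeff_two_linearSeries_pow_five {τ : R →+ V} (hτ : IsGradedTrace G τ)
    {t s : R} (ht : t ∈ G 1) (hs : s ∈ G 1) :
    τ (coeff 2 (linearSeries t s ^ 5)) = 5 • τ (mixedQuintic t s) := by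
  have hw : mixedQuintic t s = t * t * t * s * s + t * t * s * t * s := by
    rw [mixedQuintic]
    noncomm_ring
  rw [coeff_two_linearSeries_pow_five, hw, map_add τ (t * t * t * s * s), nsmul_add,
    ← hτ.sum_rotations_quintic ht ht ht hs hs, ← hτ.sum_rotations_quintic ht ht hs ht hs]
  rw [map_add]

theorem IsGradedTrace.map_coeff_two_polyakovWiegmannForm {τ : R →+ V} (hτ : IsGradedTrace G τ)
    {a A b B : R} (ha : a ∈ G 1) (hA : A ∈ G 1) (hb : b ∈ G 1) (hB : B ∈ G 1) :
    τ (coeff 2 (polyakovWiegmannForm (linearSeries a A) (linearSeries b B)))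
      = 2 • τ (mixedQuartic a A b B) + τ ((a * B) ^ 2 - (b * A) ^ 2) := by
  rw [coeff_two_polyakovWiegmannForm, map_add τ (2 • _), map_nsmul]
  simp only [mixedQuartic, sq, add_mul, sub_mul, mul_add, ← mul_assoc, map_add, map_sub]
  -- Cyclicity identifies the words on the two sides, up to sign.
  rw [hτ.rotate_quartic hb hA ha hA, hτ.rotate_quartic hb ha hA hA,
    hτ.rotate_quartic ha hb hA hA, hτ.rotate_quartic hb hA hA ha,
    hτ.rotate_quartic hA ha ha hB, hτ.rotate_quartic ha hB hb hB,
    hτ.rotate_quartic hB hb hB ha, hτ.rotate_quartic hb ha hB hB,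
    hτ.rotate_quartic hA hb hb hB, hτ.rotate_quartic hb hA hb hB,
    hτ.rotate_quartic hA hB hb hb, hτ.rotate_quartic hB hb hb hA,
    hτ.rotate_quartic hA hB ha hb, hτ.rotate_quartic hB ha hb hA,
    hτ.rotate_quartic hA hb ha hB, hτ.rotate_quartic hb ha hB hA,
    hτ.rotate_quartic hA hb hA hb]
  abel

theorem polyakovWiegmann_linearSeries {τ : R →+ V} (hτ : IsGradedTrace G τ) {d₁ d₂ : R →+ R}
    (h₁₂ : IsBidifferential G d₁ d₂) {a A b B : R} (ha : a ∈ G 1)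
    (hA : A ∈ G 1) (hb : b ∈ G 1) (hB : B ∈ G 1)
    (hu : pencil d₁ d₂ (linearSeries a A) = linearSeries a A ^ 2)
    (hv : pencil d₁ d₂ (linearSeries b B) = -linearSeries b B ^ 2) :
    10 • τ (mixedQuintic (a + b) (A + B))
      = 10 • τ (mixedQuintic a A) + 10 • τ (mixedQuintic b B)
        + 5 • (τ (d₁ (coeff 2 (polyakovWiegmannForm (linearSeries a A) (linearSeries b B))))
          + τ (d₂ (coeff 1 (polyakovWiegmannForm (linearSeries a A) (linearSeries b B))))) := by
  have h := polyakovWiegmann (hτ.comp_coeff 2) h₁₂.isGradedDifferential_pencil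
    (linearSeries_mem_powerSeriesGrading ha hA)
    (linearSeries_mem_powerSeriesGrading hb hB) hu hv
  have hcoeff (f : R⟦X⟧) : coeff 2 (pencil d₁ d₂ f) = d₁ (coeff 2 f) + d₂ (coeff 1 f) :=
    coeff_succ_pencil d₁ d₂ f 1
  simpa only [linearSeries_add, AddMonoidHom.comp_apply, LinearMap.toAddMonoidHom_coe,
    hτ.map_coeff_two_linearSeries_pow_five ha hA, hτ.map_coeff_two_linearSeries_pow_five hb hB,
    hτ.map_coeff_two_linearSeries_pow_five (add_mem ha hb) (add_mem hA hB),
    hcoeff, map_add, smul_smul, Nat.reduceMul] using h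

theorem pencil_linearSeries_right {d₁ d₂ : R →+ R} (h : IsBidifferential G d₁ d₂) {g g' : R}
    (hg : IsInversePair G g g') :
    pencil d₁ d₂ (linearSeries (d₁ g * g') (d₂ g * g'))
      = linearSeries (d₁ g * g') (d₂ g * g') ^ 2 := by
  simpa only [pencil_C, linearSeries_mul_C] using
    h.isGradedDifferential_pencil.maurerCartan_right hg.map_C

theorem pencil_linearSeries_left {d₁ d₂ : R →+ R} (h : IsBidifferential G d₁ d₂) {g g' : R}
    (hg : IsInversePair G g g') :
    pencil d₁ d₂ (linearSeries (g' * d₁ g) (g' * d₂ g))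
      = -linearSeries (g' * d₁ g) (g' * d₂ g) ^ 2 := by
  simpa only [pencil_C, C_mul_linearSeries] using
    h.isGradedDifferential_pencil.maurerCartan_left hg.map_C

end GradedMonoid

/-! ### The transgression of `Tr F³` -/

theorem conj_pow_of_mul_eq_one {g g' : R} (hl : g' * g = 1) (hr : g * g' = 1) (x : R) (n : ℕ) :
    (g' * x * g) ^ n = g' * x ^ n * g := by
  induction n with
  | zero => rw [pow_zero, pow_zero, mul_one, hl]
  | succ n ih => rw [pow_succ, ih, conj_mul_conj hr, pow_succ]

theorem mixedQuintic_conj {g g' : R} (hl : g' * g = 1) (hr : g * g' = 1) (t s : R) :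
    mixedQuintic (g' * t * g) (g' * s * g) = g' * mixedQuintic t s * g := by
  simp only [mixedQuintic, conj_pow_of_mul_eq_one hl hr, conj_mul_conj hr, mul_add, add_mul]

theorem mixedQuintic_mem [SetLike.GradedMonoid G] {t s : R} (ht : t ∈ G 1) (hs : s ∈ G 1) :
    mixedQuintic t s ∈ G 5 := by
  have ht₂ : t ^ 2 ∈ G 2 := SetLike.pow_mem_graded 2 ht
  refine add_mem ?_ ?_
  · exact SetLike.mul_mem_graded (SetLike.pow_mem_graded 3 ht) (SetLike.pow_mem_graded 2 hs)
  · exact SetLike.mul_mem_graded (SetLike.mul_mem_graded (SetLike.mul_mem_graded ht₂ hs) ht) hs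

/-- The form whose trace is four times the third Bott–Chern form, the factor clearing denominators,
for `t = h⁻¹∂h`, `s = h⁻¹∂̄h`, `F = ∂̄t`, `a = θ₁`, `A = θ̄₁`, `b = θ₂` and `B = θ̄₂`. -/
def bottChernForm (t s F a A b B : R) : R :=
  2 • (t * F * s - s * F * t) - ((a + b) * (A + B)) ^ 2 + 2 • mixedQuartic a A b B
    + ((a * B) ^ 2 - (b * A) ^ 2)

section Transgression

variable [SetLike.GradedMonoid G] {τ : R →+ V} {d₁ d₂ : R →+ R} {δ₁ δ₂ : V →+ V} {b b' c c' : R}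

theorem IsGradedTrace.map_mixedQuintic_conj (hτ : IsGradedTrace G τ) {t s : R} (ht : t ∈ G 1)
    (hs : s ∈ G 1) (hb : IsInversePair G b b') :
    τ (mixedQuintic (b' * t * b) (b' * s * b)) = τ (mixedQuintic t s) := by
  rw [mixedQuintic_conj hb.inv_mul hb.mul_inv, hτ.map_conj (mixedQuintic_mem ht hs) hb]

theorem IsGradedTrace.map_sq_mul_conj (hτ : IsGradedTrace G τ) {t s : R} (ht : t ∈ G 1)
    (hs : s ∈ G 1) (hb : IsInversePair G b b') :
    τ ((b' * t * b * (b' * s * b)) ^ 2) = τ ((t * s) ^ 2) := by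
  rw [conj_mul_conj hb.mul_inv, conj_pow_of_mul_eq_one hb.inv_mul hb.mul_inv,
    hτ.map_conj (SetLike.pow_mem_graded 2 (SetLike.mul_mem_graded ht hs)) hb]

theorem IsGradedTrace.map_bottChernForm (hτ : IsGradedTrace G τ) {a A β B : R} (ha : a ∈ G 1)
    (hA : A ∈ G 1) (hβ : β ∈ G 1) (hB : B ∈ G 1) (hb : IsInversePair G b b') {t s : R}
    (ht : t = b' * (a + β) * b) (hs : s = b' * (A + B) * b) (F : R) :
    τ (bottChernForm t s F a A β B)
      = 2 • τ (t * F * s - s * F * t) - τ ((t * s) ^ 2)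
        + τ (coeff 2 (polyakovWiegmannForm (linearSeries a A) (linearSeries β B))) := by
  rw [bottChernForm, hτ.map_coeff_two_polyakovWiegmannForm ha hA hβ hB, ht, hs,
    hτ.map_sq_mul_conj (add_mem ha hβ) (add_mem hA hB) hb, map_add, map_add, map_sub τ (2 • _),
    map_nsmul, map_nsmul]
  abel

theorem two_nsmul_trace_mixedQuintic_logDeriv [IsAddTorsionFree V] (hτ : IsGradedTrace G τ)
    (h : IsBidifferential G d₁ d₂) (hb : IsInversePair G b b') (hc : IsInversePair G c c')
    (hb₀ : τ (mixedQuintic (d₁ b * b') (d₂ b * b')) = 0)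
    (hc₀ : τ (mixedQuintic (c' * d₁ c) (c' * d₂ c)) = 0) :
    2 • τ (mixedQuintic (d₁ b * b' + c' * d₁ c) (d₂ b * b' + c' * d₂ c))
      = τ (d₁ (coeff 2 (polyakovWiegmannForm (linearSeries (d₁ b * b') (d₂ b * b'))
          (linearSeries (c' * d₁ c) (c' * d₂ c)))))
        + τ (d₂ (coeff 1 (polyakovWiegmannForm (linearSeries (d₁ b * b') (d₂ b * b'))
          (linearSeries (c' * d₁ c) (c' * d₂ c))))) := by
  have hpw := polyakovWiegmann_linearSeries hτ h (h.fst.right_logDeriv_mem hb)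
    (h.snd.right_logDeriv_mem hb) (h.fst.left_logDeriv_mem hc) (h.snd.left_logDeriv_mem hc)
    (pencil_linearSeries_right h hb) (pencil_linearSeries_left h hc)
  rw [hb₀, hc₀, smul_zero, add_zero, zero_add] at hpw
  refine nsmul_right_injective (n := 5) (by decide) ?_
  simpa only [smul_smul, Nat.reduceMul] using hpw

theorem exists_map_trace_bottChernForm [IsAddTorsionFree V] (hτ : IsGradedTrace G τ)
    (h : IsBidifferential G d₁ d₂) (hδ : ∀ x, δ₁ (τ x) = τ (d₁ x))
    (hb : IsInversePair G b b') (hc : IsInversePair G c c')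
    (hb₀ : τ (mixedQuintic (d₁ b * b') (d₂ b * b')) = 0)
    (hc₀ : τ (mixedQuintic (c' * d₁ c) (c' * d₂ c)) = 0) {t s F : R}
    (hconn : IsChernConnection G d₁ d₂ t s F)
    (ht : t = b' * (d₁ b * b' + c' * d₁ c) * b) (hs : s = b' * (d₂ b * b' + c' * d₂ c) * b) :
    ∃ x, δ₁ (τ (bottChernForm t s F (d₁ b * b') (d₂ b * b') (c' * d₁ c) (c' * d₂ c)))
      = 4 • τ (t * F ^ 2) + τ (d₂ x) := by
  have ha := h.fst.right_logDeriv_mem hb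
  have hA := h.snd.right_logDeriv_mem hb
  have hβ := h.fst.left_logDeriv_mem hc
  have hB := h.snd.left_logDeriv_mem hc
  set κ := polyakovWiegmannForm (linearSeries (d₁ b * b') (d₂ b * b'))
    (linearSeries (c' * d₁ c) (c' * d₂ c)) with hκ
  have hquintic : 2 • τ (mixedQuintic t s) = τ (d₁ (coeff 2 κ)) + τ (d₂ (coeff 1 κ)) := by
    rw [ht, hs, hτ.map_mixedQuintic_conj (add_mem ha hβ) (add_mem hA hB) hb,
      two_nsmul_trace_mixedQuintic_logDeriv hτ h hb hc hb₀ hc₀]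
  refine ⟨2 • (t ^ 3 * s) - coeff 1 κ, ?_⟩
  rw [hτ.map_bottChernForm ha hA hβ hB hb ht hs, ← hκ, map_add, map_sub δ₁, map_nsmul, hδ, hδ, hδ,
    hconn.trace_chernSimons hτ h, hquintic]
  simp only [map_sub, map_nsmul]
  abel

theorem map_map_trace_bottChernForm [IsAddTorsionFree V] (hτ : IsGradedTrace G τ)
    (h : IsBidifferential G d₁ d₂) (hδ₁ : ∀ x, δ₁ (τ x) = τ (d₁ x))
    (hδ₂ : ∀ x, δ₂ (τ x) = τ (d₂ x)) (hb : IsInversePair G b b') (hc : IsInversePair G c c')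
    (hb₀ : τ (mixedQuintic (d₁ b * b') (d₂ b * b')) = 0)
    (hc₀ : τ (mixedQuintic (c' * d₁ c) (c' * d₂ c)) = 0) {t s F : R}
    (ht : t = b' * c' * d₁ (c * b)) (hs : s = b' * c' * d₂ (c * b)) (hF : F = d₂ t) :
    δ₂ (δ₁ (τ (bottChernForm t s F (d₁ b * b') (d₂ b * b') (c' * d₁ c) (c' * d₂ c))))
      = 4 • τ (F ^ 3) := by
  have hconn : IsChernConnection G d₁ d₂ t s F := by
    rw [hF, ht, hs]
    exact .of_isInversePair h (hc.mul hb)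
  obtain ⟨x, hx⟩ := exists_map_trace_bottChernForm hτ h hδ₁ hb hc hb₀ hc₀ hconn
    (ht.trans (h.fst.logDeriv_mul hb hc)) (hs.trans (h.snd.logDeriv_mul hb hc))
  rw [hx, map_add, map_nsmul, hδ₂, hδ₂, h.snd.map_map, map_zero, add_zero, hconn.d₂_mul_sq h.snd]

end Transgression

end GradedRing

/-! ### Triangular matrices over a graded ring -/

section MatrixGrading

variable {R V n : Type*} [Ring R] [AddCommGroup V]

/-- The grading of a matrix ring by the common degree of the entries. -/
def matrixGrading (n : Type*) (G : ℕ → AddSubgroup R) (k : ℕ) : AddSubgroup (Matrix n n R) :=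
  (G k).matrix

variable {G : ℕ → AddSubgroup R}

variable [Fintype n]

theorem map_trace_eq_trace_mapMatrix (d : R →+ R) (M : Matrix n n R) :
    d M.trace = (d.mapMatrix M).trace :=
  map_sum d _ _

variable [DecidableEq n]

theorem IsGradedTrace.comp_trace {τ : R →+ V} (hτ : IsGradedTrace G τ) :
    IsGradedTrace (matrixGrading n G) (τ.comp (Matrix.traceAddMonoidHom n R)) := by
  intro p q M N hM hN
  simp only [AddMonoidHom.comp_apply, Matrix.traceAddMonoidHom_apply, Matrix.trace,
    Matrix.diag_apply, Matrix.mul_apply, map_sum, Finset.smul_sum]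
  rw [Finset.sum_comm]
  exact Finset.sum_congr rfl fun j _ => Finset.sum_congr rfl fun i _ => hτ (hM i j) (hN j i)

instance [SetLike.GradedMonoid G] : SetLike.GradedMonoid (matrixGrading n G) where
  one_mem i j := by
    rw [Matrix.one_apply]
    split_ifs
    exacts [SetLike.GradedOne.one_mem (A := G), zero_mem _]
  mul_mem p q M N hM hN i j := by
    rw [Matrix.mul_apply]
    exact sum_mem fun k _ => SetLike.mul_mem_graded (A := G) (hM i k) (hN k j)

theorem IsGradedDifferential.mapMatrix {d : R →+ R} (hd : IsGradedDifferential G d) :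
    IsGradedDifferential (matrixGrading n G) d.mapMatrix where
  map_mem hM i j := hd.map_mem (hM i j)
  map_mul {k M} hM N := by
    ext i j
    simp only [AddMonoidHom.mapMatrix_apply, Matrix.map_apply, Matrix.add_apply, Matrix.smul_apply,
      Matrix.mul_apply, map_sum, Finset.smul_sum, ← Finset.sum_add_distrib]
    exact Finset.sum_congr rfl fun l _ => hd.map_mul (hM i l) _
  map_map M := by
    ext i j
    exact hd.map_map (M i j)

theorem IsBidifferential.mapMatrix {d₁ d₂ : R →+ R} (h : IsBidifferential G d₁ d₂) :
    IsBidifferential (matrixGrading n G) d₁.mapMatrix d₂.mapMatrix where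
  fst := h.fst.mapMatrix
  snd := h.snd.mapMatrix
  anticomm M := by
    ext i j
    exact h.anticomm (M i j)

end MatrixGrading

section Triangular

open Matrix

variable {R n α : Type*} [Ring R] [Fintype n] [LinearOrder α] {f : n → α} {M N : Matrix n n R}

theorem mul_apply_self_of_blockTriangular (hf : f.Injective) (hM : BlockTriangular M f)
    (hN : BlockTriangular N f) (i : n) : (M * N) i i = M i i * N i i := by
  rw [mul_apply]
  refine Finset.sum_eq_single_of_mem i (Finset.mem_univ i) fun k _ hki => ?_
  rcases (hf.ne hki).lt_or_gt with hlt | hgt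
  · rw [hM hlt, zero_mul]
  · rw [hN hgt, mul_zero]

theorem mixedQuintic_eq_zero {x : R} (hx : x * x = 0) (y : R) : mixedQuintic x y = 0 := by
  rw [mixedQuintic, pow_succ x 2, sq x, hx]
  simp only [zero_mul, add_zero]

variable [DecidableEq n]

theorem trace_mixedQuintic_eq_zero (hf : f.Injective) (hM : BlockTriangular M f)
    (hN : BlockTriangular N f) (hM₀ : ∀ i, M i i * M i i = 0) :
    trace (mixedQuintic M N) = 0 := by
  have hMM := hM.mul hM
  have hMMN := hMM.mul hN
  have hMMNM := hMMN.mul hM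
  refine Finset.sum_eq_zero fun i _ => ?_
  calc mixedQuintic M N i i = mixedQuintic (M i i) (N i i) := by
        simp only [mixedQuintic, pow_succ, pow_zero, one_mul, Matrix.add_apply,
          mul_apply_self_of_blockTriangular hf (hMM.mul hM) (hN.mul hN),
          mul_apply_self_of_blockTriangular hf hMMNM hN,
          mul_apply_self_of_blockTriangular hf hMMN hM, mul_apply_self_of_blockTriangular hf hMM hN,
          mul_apply_self_of_blockTriangular hf hMM hM, mul_apply_self_of_blockTriangular hf hM hM,
          mul_apply_self_of_blockTriangular hf hN hN]
    _ = 0 := mixedQuintic_eq_zero (hM₀ i) _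

open scoped IsMulCommutative in
theorem blockTriangular_of_mul_eq_one (S : Subring R) [IsMulCommutative S] (hM : ∀ i j, M i j ∈ S)
    (hN : ∀ i j, N i j ∈ S) (hNM : N * M = 1) (hMf : BlockTriangular M f) :
    BlockTriangular N f := by
  let M₀ : Matrix n n S := of fun i j => ⟨M i j, hM i j⟩
  let N₀ : Matrix n n S := of fun i j => ⟨N i j, hN i j⟩
  have hNM₀ : N₀ * M₀ = 1 := by
    refine map_injective Subtype.val_injective (?_ : (N₀ * M₀).map S.subtype = map 1 S.subtype)
    rw [Matrix.map_mul, Matrix.map_one _ (map_zero _) (map_one _)]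
    exact hNM
  let : Invertible M₀ := invertibleOfLeftInverse M₀ N₀ hNM₀
  have hM₀ : BlockTriangular M₀ f := fun i j hij => Subtype.ext (hMf hij)
  have hN₀ : BlockTriangular N₀ f :=
    inv_eq_left_inv hNM₀ ▸ blockTriangular_inv_of_blockTriangular hM₀
  exact hN₀.map S.subtype

end Triangular

section GradedCommutative

open Matrix

variable {R n α : Type*} [Ring R] [Fintype n] [DecidableEq n] [LinearOrder α]
  {G : ℕ → AddSubgroup R} [SetLike.GradedMonoid G] {d₁ d₂ : R →+ R} {f : n → α}
  {M M' : Matrix n n R}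

theorem IsGradedTrace.isMulCommutative_subring_zero (hR : IsGradedTrace G (AddMonoidHom.id R)) :
    IsMulCommutative (SetLike.GradeZero.subring G) :=
  isMulCommutative_iff.2 fun x y => Subtype.ext (hR.comm_of_even Even.zero x.2 y.2)

theorem IsInversePair.blockTriangular (hM : IsInversePair (matrixGrading n G) M M')
    (hR : IsGradedTrace G (AddMonoidHom.id R)) (hMf : BlockTriangular M f) :
    BlockTriangular M' f :=
  have := hR.isMulCommutative_subring_zero
  blockTriangular_of_mul_eq_one (SetLike.GradeZero.subring G) hM.mem hM.inv_mem hM.inv_mul hMf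

variable [IsAddTorsionFree R]

theorem trace_mixedQuintic_right_logDeriv (hR : IsGradedTrace G (AddMonoidHom.id R))
    (h₁ : IsGradedDifferential G d₁) (hM : IsInversePair (matrixGrading n G) M M')
    (hf : f.Injective) (hMf : BlockTriangular M f) :
    trace (mixedQuintic (d₁.mapMatrix M * M') (d₂.mapMatrix M * M')) = 0 :=
  have hM'f := hM.blockTriangular hR hMf
  trace_mixedQuintic_eq_zero hf ((hMf.map d₁).mul hM'f) ((hMf.map d₂).mul hM'f)
    fun i => hR.mul_self_eq_zero (h₁.mapMatrix.right_logDeriv_mem hM i i)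

theorem trace_mixedQuintic_left_logDeriv (hR : IsGradedTrace G (AddMonoidHom.id R))
    (h₁ : IsGradedDifferential G d₁) (hM : IsInversePair (matrixGrading n G) M M')
    (hf : f.Injective) (hMf : BlockTriangular M f) :
    trace (mixedQuintic (M' * d₁.mapMatrix M) (M' * d₂.mapMatrix M)) = 0 :=
  have hM'f := hM.blockTriangular hR hMf
  trace_mixedQuintic_eq_zero hf (hM'f.mul (hMf.map d₁)) (hM'f.mul (hMf.map d₂))
    fun i => hR.mul_self_eq_zero (h₁.mapMatrix.left_logDeriv_mem hM i i)

theorem map_map_matrixTrace_bottChernForm {β : Type*} [LinearOrder β] {g : n → β}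
    {b b' c c' t s F : Matrix n n R} (hR : IsGradedTrace G (AddMonoidHom.id R))
    (h : IsBidifferential G d₁ d₂) (hb : IsInversePair (matrixGrading n G) b b')
    (hc : IsInversePair (matrixGrading n G) c c') (hf : f.Injective) (hbf : BlockTriangular b f)
    (hg : g.Injective) (hcg : BlockTriangular c g)
    (ht : t = b' * c' * d₁.mapMatrix (c * b)) (hs : s = b' * c' * d₂.mapMatrix (c * b))
    (hF : F = d₂.mapMatrix t) :
    d₂ (d₁ (trace (bottChernForm t s F (d₁.mapMatrix b * b') (d₂.mapMatrix b * b')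
      (c' * d₁.mapMatrix c) (c' * d₂.mapMatrix c)))) = 4 • trace (F ^ 3) :=
  map_map_trace_bottChernForm hR.comp_trace h.mapMatrix (map_trace_eq_trace_mapMatrix d₁)
    (map_trace_eq_trace_mapMatrix d₂) hb hc (trace_mixedQuintic_right_logDeriv hR h.fst hb hf hbf)
    (trace_mixedQuintic_left_logDeriv hR h.fst hc hg hcg) ht hs hF

end GradedCommutative

/-! ### The Dolbeault double complex -/

namespace DolbeaultAlgebra

variable {r : ℕ} (A : DolbeaultAlgebra Ω)

/-- The grading by total degree: the sum of the `A.deg p q` with `p + q = n`. -/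
def totalDeg (n : ℕ) : AddSubgroup Ω :=
  (⨆ i : {i : ℕ × ℕ // i.1 + i.2 = n}, A.deg i.1.1 i.1.2).toAddSubgroup

variable {A}

theorem mem_totalDeg {p q n : ℕ} {x : Ω} (hx : x ∈ A.deg p q) (hpq : p + q = n) :
    x ∈ A.totalDeg n :=
  Submodule.mem_iSup_of_mem (p := fun i : {i : ℕ × ℕ // i.1 + i.2 = n} => A.deg i.1.1 i.1.2)
    ⟨(p, q), hpq⟩ hx

@[elab_as_elim]
theorem totalDeg_induction {n : ℕ} {P : Ω → Prop}
    (mem : ∀ p q, p + q = n → ∀ x ∈ A.deg p q, P x) (add : ∀ x y, P x → P y → P (x + y)) {x : Ω}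
    (hx : x ∈ A.totalDeg n) : P x :=
  Submodule.iSup_induction _ (motive := P) hx (fun i => mem i.1.1 i.1.2 i.2)
    (mem 0 n (zero_add n) 0 (zero_mem _)) add

variable (A)

instance : SetLike.GradedMonoid A.totalDeg where
  one_mem := mem_totalDeg A.one_mem (zero_add 0)
  mul_mem m n x y hx hy := by
    refine totalDeg_induction (fun p q hpq x hx => ?_) (fun x x' h h' => ?_) hx
    · refine totalDeg_induction (fun p' q' hpq' y hy => ?_) (fun y y' h h' => ?_) hy
      · exact mem_totalDeg (A.mul_mem hx hy) (by rw [← hpq, ← hpq', add_add_add_comm])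
      · exact (mul_add x y y').symm ▸ add_mem h h'
    · exact (add_mul x x' y).symm ▸ add_mem h h'

theorem isGradedTrace_id : IsGradedTrace A.totalDeg (AddMonoidHom.id Ω) := by
  intro m n x y hx hy
  refine totalDeg_induction (fun p q hpq x hx => ?_) (fun x x' h h' => ?_) hx
  · refine totalDeg_induction (fun p' q' hpq' y hy => ?_) (fun y y' h h' => ?_) hy
    · simpa [← hpq, ← hpq', ← Int.cast_smul_eq_zsmul ℂ] using A.gcomm x y hx hy
    · rw [add_mul, mul_add, map_add, map_add, h, h', smul_add]
  · rw [add_mul, mul_add, map_add, map_add, h, h', smul_add]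

theorem isGradedDifferential_of_deg {d : Ω →+ Ω}
    (hmem : ∀ p q, ∀ x ∈ A.deg p q, d x ∈ A.totalDeg (p + q + 1))
    (hmul : ∀ p q, ∀ x ∈ A.deg p q, ∀ y,
      d (x * y) = d x * y + (-1 : ℂ) ^ (p + q) • (x * d y))
    (hsq : ∀ x, d (d x) = 0) : IsGradedDifferential A.totalDeg d where
  map_mem hx := by
    refine totalDeg_induction (fun p q hpq x hx => ?_) (fun x y h h' => ?_) hx
    · exact hpq ▸ hmem p q x hx
    · exact (map_add d x y).symm ▸ add_mem h h'
  map_mul hx y := by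
    refine totalDeg_induction (fun p q hpq x hx => ?_) (fun x x' h h' => ?_) hx
    · simpa [← hpq, ← Int.cast_smul_eq_zsmul ℂ] using hmul p q x hx y
    · simp only [add_mul, map_add, h, h', smul_add]
      abel
  map_map := hsq

theorem isBidifferential :
    IsBidifferential A.totalDeg A.pd.toAddMonoidHom A.pdb.toAddMonoidHom where
  fst := A.isGradedDifferential_of_deg
    (fun p q _ hx => mem_totalDeg (A.pd_mem hx) (add_right_comm p 1 q))
    (fun _ _ x hx y => A.pd_leibniz x y hx) A.pd_pd
  snd := A.isGradedDifferential_of_deg (fun _ _ _ hx => mem_totalDeg (A.pdb_mem hx) rfl)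
    (fun _ _ x hx y => A.pdb_leibniz x y hx) A.pdb_pdb
  anticomm := A.pd_pdb

variable {A}

theorem MatDeg.isInversePair {M M' : Matrix (Fin r) (Fin r) Ω} (hM : A.MatDeg 0 0 M)
    (hM' : A.MatDeg 0 0 M') (hl : M' * M = 1) (hr : M * M' = 1) :
    IsInversePair (matrixGrading (Fin r) A.totalDeg) M M' where
  mem i j := mem_totalDeg (hM i j) (zero_add 0)
  inv_mem i j := mem_totalDeg (hM' i j) (zero_add 0)
  inv_mul := hl
  mul_inv := hr

end DolbeaultAlgebra

theorem trace_bottChernForm {R n : Type*} [Ring R] [Algebra ℂ R] [Fintype n] [DecidableEq n]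
    (t s F a A b B : Matrix n n R) :
    Matrix.trace (bottChernForm t s F a A b B) =
      4 • (1 / 2 : ℂ) • Matrix.trace
        (t * F * s - s * F * t - (1 / 2 : ℂ) • ((a + b) * (A + B)) ^ 2
          + (a ^ 2 + b ^ 2 + a * b) * A * B
          - (a ^ 2 + b ^ 2 + b * a) * B * A
          - (b * a - a * b) * (A ^ 2 + B ^ 2)
          - b * A * b * B + a * A * a * B
          - b * A * a * A + b * B * a * B
          + (1 / 2 : ℂ) • ((a * B) ^ 2 - (b * A) ^ 2)) := by
  rw [← Matrix.trace_smul, ← Matrix.trace_smul, bottChernForm, mixedQuartic]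
  congr 1
  module

theorem stmt19_general
    (A : DolbeaultAlgebra Ω) (r : ℕ)
    (b c binv cinv : Matrix (Fin r) (Fin r) Ω)
    (hbdeg : A.MatDeg 0 0 b) (hcdeg : A.MatDeg 0 0 c)
    (hbinvdeg : A.MatDeg 0 0 binv) (hcinvdeg : A.MatDeg 0 0 cinv)
    (hbu : ∀ i j : Fin r, j < i → b i j = 0)
    (hcl : ∀ i j : Fin r, i < j → c i j = 0)
    (hbinvl : binv * b = 1) (hbinvr : b * binv = 1)
    (hcinvl : cinv * c = 1) (hcinvr : c * cinv = 1)
    (h hinv : Matrix (Fin r) (Fin r) Ω) (hh : h = c * b) (hhinv : hinv = binv * cinv)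
    (θ₁ θ₂ θ θb₁ θb₂ θb : Matrix (Fin r) (Fin r) Ω)
    (hθ₁ : θ₁ = A.mpd b * binv) (hθ₂ : θ₂ = cinv * A.mpd c) (hθ : θ = θ₁ + θ₂)
    (hθb₁ : θb₁ = A.mpdb b * binv) (hθb₂ : θb₂ = cinv * A.mpdb c) (hθb : θb = θb₁ + θb₂)
    (Bθ Bθb BΘ : Matrix (Fin r) (Fin r) Ω)
    (hBθ : Bθ = hinv * A.mpd h) (hBθb : Bθb = hinv * A.mpdb h) (hBΘ : BΘ = A.mpdb Bθ)
    (Ψ : Ω)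
    (hΨ : Ψ = (1 / 2 : ℂ) • Matrix.trace
      (Bθ * BΘ * Bθb - Bθb * BΘ * Bθ - (1 / 2 : ℂ) • (θ * θb) ^ 2
        + (θ₁ ^ 2 + θ₂ ^ 2 + θ₁ * θ₂) * θb₁ * θb₂
        - (θ₁ ^ 2 + θ₂ ^ 2 + θ₂ * θ₁) * θb₂ * θb₁
        - (θ₂ * θ₁ - θ₁ * θ₂) * (θb₁ ^ 2 + θb₂ ^ 2)
        - θ₂ * θb₁ * θ₂ * θb₂ + θ₁ * θb₁ * θ₁ * θb₂
        - θ₂ * θb₁ * θ₁ * θb₁ + θ₂ * θb₂ * θ₁ * θb₂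
        + (1 / 2 : ℂ) • ((θ₁ * θb₂) ^ 2 - (θ₂ * θb₁) ^ 2))) :
    Matrix.trace (BΘ ^ 3) = A.pdb (A.pd Ψ) ∧
    (1 / 6 : ℂ) • Matrix.trace (BΘ ^ 3) = A.pdb (A.pd ((1 / 6 : ℂ) • Ψ)) := by
  have : IsAddTorsionFree Ω :=
    Module.isTorsionFree_nat_iff_isAddTorsionFree.1 (.trans ℂ)
  have hb := hbdeg.isInversePair hbinvdeg hbinvl hbinvr
  have hc := hcdeg.isInversePair hcinvdeg hcinvl hcinvr
  have hb_upper : b.BlockTriangular id := fun i j => hbu i j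
  have hc_lower : c.BlockTriangular OrderDual.toDual := fun i j => hcl i j
  have hΨ₄ : Matrix.trace (bottChernForm Bθ Bθb BΘ θ₁ θb₁ θ₂ θb₂) = 4 • Ψ := by
    rw [trace_bottChernForm, hΨ, hθ, hθb]
  have htransgression :
      A.pdb (A.pd (Matrix.trace (bottChernForm Bθ Bθb BΘ θ₁ θb₁ θ₂ θb₂)))
        = 4 • Matrix.trace (BΘ ^ 3) := by
    subst hh hhinv hθ₁ hθ₂ hθb₁ hθb₂
    exact map_map_matrixTrace_bottChernForm A.isGradedTrace_id A.isBidifferential hb hc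
      Function.injective_id hb_upper OrderDual.toDual.injective hc_lower hBθ hBθb hBΘ
  rw [hΨ₄, map_nsmul, map_nsmul] at htransgression
  have hch₃ := nsmul_right_injective (n := 4) (by decide) htransgression.symm
  exact ⟨hch₃, by rw [map_smul, map_smul, ← hch₃]⟩

/-- (Proposition: the third Bott–Chern form) In the Cholesky setting, with
`Ψ = (1/2)Tr(BθBΘBθ̄ - Bθ̄BΘBθ - (1/2)(θθ̄)² + (θ₁² + θ₂² + θ₁θ₂)θ̄₁θ̄₂
  - (θ₁² + θ₂² + θ₂θ₁)θ̄₂θ̄₁ - (θ₂θ₁ - θ₁θ₂)(θ̄₁² + θ̄₂²) - θ₂θ̄₁θ₂θ̄₂ + θ₁θ̄₁θ₁θ̄₂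
  - θ₂θ̄₁θ₁θ̄₁ + θ₂θ̄₂θ₁θ̄₂ + (1/2)((θ₁θ̄₂)² - (θ₂θ̄₁)²))`,
one has `Tr(BΘ³) = ∂̄∂Ψ`; equivalently `ch₃ = (1/6)Tr(BΘ³)` satisfies `ch₃ = ∂̄∂bc₃`
with `bc₃ = (1/6)Ψ`. -/
theorem stmt19
    (A : DolbeaultAlgebra Ω) (r : ℕ) (hr : 1 ≤ r)
    (b c binv cinv : Matrix (Fin r) (Fin r) Ω)
    (hbdeg : A.MatDeg 0 0 b) (hcdeg : A.MatDeg 0 0 c)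
    (hbinvdeg : A.MatDeg 0 0 binv) (hcinvdeg : A.MatDeg 0 0 cinv)
    (hbu : ∀ i j : Fin r, j < i → b i j = 0) (hbd : ∀ i : Fin r, b i i = 1)
    (hcl : ∀ i j : Fin r, i < j → c i j = 0)
    (hbinvl : binv * b = 1) (hbinvr : b * binv = 1)
    (hcinvl : cinv * c = 1) (hcinvr : c * cinv = 1)
    (h hinv : Matrix (Fin r) (Fin r) Ω) (hh : h = c * b) (hhinv : hinv = binv * cinv)
    (θ₁ θ₂ θ θb₁ θb₂ θb : Matrix (Fin r) (Fin r) Ω)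
    (hθ₁ : θ₁ = A.mpd b * binv) (hθ₂ : θ₂ = cinv * A.mpd c) (hθ : θ = θ₁ + θ₂)
    (hθb₁ : θb₁ = A.mpdb b * binv) (hθb₂ : θb₂ = cinv * A.mpdb c) (hθb : θb = θb₁ + θb₂)
    (Bθ Bθb BΘ : Matrix (Fin r) (Fin r) Ω)
    (hBθ : Bθ = hinv * A.mpd h) (hBθb : Bθb = hinv * A.mpdb h) (hBΘ : BΘ = A.mpdb Bθ)
    (Ψ : Ω)
    (hΨ : Ψ = (1 / 2 : ℂ) • Matrix.trace
      (Bθ * BΘ * Bθb - Bθb * BΘ * Bθ - (1 / 2 : ℂ) • (θ * θb) ^ 2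
        + (θ₁ ^ 2 + θ₂ ^ 2 + θ₁ * θ₂) * θb₁ * θb₂
        - (θ₁ ^ 2 + θ₂ ^ 2 + θ₂ * θ₁) * θb₂ * θb₁
        - (θ₂ * θ₁ - θ₁ * θ₂) * (θb₁ ^ 2 + θb₂ ^ 2)
        - θ₂ * θb₁ * θ₂ * θb₂ + θ₁ * θb₁ * θ₁ * θb₂
        - θ₂ * θb₁ * θ₁ * θb₁ + θ₂ * θb₂ * θ₁ * θb₂
        + (1 / 2 : ℂ) • ((θ₁ * θb₂) ^ 2 - (θ₂ * θb₁) ^ 2))) :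
    Matrix.trace (BΘ ^ 3) = A.pdb (A.pd Ψ) ∧
    (1 / 6 : ℂ) • Matrix.trace (BΘ ^ 3) = A.pdb (A.pd ((1 / 6 : ℂ) • Ψ)) := by
  exact stmt19_general A r b c binv cinv hbdeg hcdeg hbinvdeg hcinvdeg hbu hcl hbinvl hbinvr
    hcinvl hcinvr h hinv hh hhinv θ₁ θ₂ θ θb₁ θb₂ θb hθ₁ hθ₂ hθ hθb₁ hθb₂ hθb Bθ Bθb BΘ
    hBθ hBθb hBΘ Ψ hΨ
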